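/- arXiv:1603.01891 — 2 statements merged into one kernel-verified Lean document; each statement's English description precedes it below -/
import Mathlib

section
/- Let 1≤s≤∞, and let g(t), h(t) be 2π-periodic functions having finite derivatives and satisfying r(t) := √(g²(t)+h²(t)) ≠ 0 for all t and M := sup_{t∈ℝ} √((g'(t))²+(h'(t))²) / √(g²(t)+h²(t)) < ∞. Let φ(t) = g(t)cos(nt+γ) + h(t)sin(nt+γ) with γ∈ℝ, n∈ℕ. Then for all n ≥ 4πsM if 1≤s<∞ (and all n≥1 if s=∞), one has inf_{λ∈ℝ} ‖φ(·) − λ‖_s = ‖r‖_s ( ‖cos t‖_s/(2π)^{1/s} + δ_n M/n ), where |δ_n| < 14π. -/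
open MeasureTheory Real Filter
open scoped ENNReal

/-- `L_s` norm over a period `[-π,π]` of a `2π`-periodic function. -/
noncomputable def periodNorm (s : ℝ≥0∞) (f : ℝ → ℝ) : ℝ :=
  (eLpNorm f s (volume.restrict (Set.Ioc (-π) π))).toReal

/-- the measure on a period -/
noncomputable abbrev pmu : Measure ℝ := volume.restrict (Set.Ioc (-π) π)

lemma lint_shift (f : ℝ → ℝ≥0∞) (hf : ∀ t, f (t + 2 * π) = f t) (u : ℝ) :
    ∫⁻ t, f (t + u) ∂pmu = ∫⁻ t, f t ∂pmu := by
  have h1 : ∫⁻ t in Set.Ioc (-π) π, f (t + u) = ∫⁻ t in Set.Ioc (-π + u) (π + u), f t := by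
    have := (measurePreserving_add_right (volume : Measure ℝ) u).setLIntegral_comp_emb
      (MeasurableEquiv.addRight u).measurableEmbedding f (Set.Ioc (-π) π)
    simpa using this
  have hper : Function.Periodic f (2 * π) := hf
  have h2 : ∫⁻ t in Set.Ioc (-π + u) (π + u), f t = ∫⁻ t in Set.Ioc (-π) π, f t := by
    have hT : (0:ℝ) < 2 * π := by positivity
    have A := isAddFundamentalDomain_Ioc hT (-π + u)
    have B := isAddFundamentalDomain_Ioc hT (-π)
    have e1 : -π + u + 2 * π = π + u := by ring
    have e2 : -π + 2 * π = π := by ring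
    rw [e1] at A
    rw [e2] at B
    refine A.setLIntegral_eq B f ?_
    rintro ⟨g, hg⟩ x
    obtain ⟨k, rfl⟩ := AddSubgroup.mem_zmultiples_iff.1 hg
    change f (k • (2 * π) + x) = f x
    rw [add_comm]
    exact hper.zsmul k x
  exact h1.trans h2

lemma pnorm_rpow {s : ℝ≥0∞} (hs : 1 ≤ s) (hs' : s ≠ ∞) (f : ℝ → ℝ) :
    eLpNorm f s pmu ^ s.toReal = ∫⁻ t, ‖f t‖ₑ ^ s.toReal ∂pmu := by
  have h0 : s ≠ 0 := (lt_of_lt_of_le one_pos hs).ne'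
  have hp : 0 < s.toReal := ENNReal.toReal_pos h0 hs'
  rw [eLpNorm_eq_lintegral_rpow_enorm_toReal h0 hs', ← ENNReal.rpow_mul,
    one_div_mul_cancel hp.ne', ENNReal.rpow_one]

lemma pnorm_shift {s : ℝ≥0∞} (hs : 1 ≤ s) (hs' : s ≠ ∞) (f : ℝ → ℝ)
    (hf : ∀ t, f (t + 2 * π) = f t) (u : ℝ) :
    eLpNorm (fun t => f (t + u)) s pmu = eLpNorm f s pmu := by
  have h0 : s ≠ 0 := (lt_of_lt_of_le one_pos hs).ne'
  rw [eLpNorm_eq_lintegral_rpow_enorm_toReal h0 hs', eLpNorm_eq_lintegral_rpow_enorm_toReal h0 hs',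
    lint_shift (fun t => ‖f t‖ₑ ^ s.toReal) (fun t => by simp only [hf]) u]

lemma polar (a b : ℝ) : ∃ β, ∀ x, a * cos x + b * sin x = √(a ^ 2 + b ^ 2) * cos (x + β) := by
  refine ⟨-(Complex.mk a b).arg, fun x => ?_⟩
  have h1 := Complex.norm_mul_cos_arg (Complex.mk a b)
  have h2 := Complex.norm_mul_sin_arg (Complex.mk a b)
  have h3 : ‖Complex.mk a b‖ = √(a ^ 2 + b ^ 2) := by
    rw [Complex.norm_def, Complex.normSq_mk]; congr 1; ring
  rw [h3] at h1 h2
  simp only at h1 h2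
  rw [cos_add, cos_neg, sin_neg]
  linear_combination (-cos x) * h1 - sin x * h2

lemma pnorm_mul_cos (s : ℝ≥0∞) (r : ℝ) :
    eLpNorm (fun v => r * cos v) s pmu = ‖r‖ₑ * eLpNorm cos s pmu :=
  eLpNorm_const_smul r cos s pmu

lemma inner_eq {s : ℝ≥0∞} (hs : 1 ≤ s) (hs' : s ≠ ∞) (a b c l : ℝ) :
    eLpNorm (fun v => a * cos (c + v) + b * sin (c + v) - l) s pmu
      = eLpNorm (fun v => √(a ^ 2 + b ^ 2) * cos v - l) s pmu := by
  obtain ⟨β, hβ⟩ := polar a b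
  rw [← pnorm_shift hs hs' (fun v => √(a ^ 2 + b ^ 2) * cos v - l)
    (fun t => by simp only [cos_add_two_pi]) (c + β)]
  congr 1
  funext v
  rw [hβ]
  congr 3; ring

lemma cos_sub_ge {s : ℝ≥0∞} (hs : 1 ≤ s) (hs' : s ≠ ∞) (r l : ℝ) :
    ‖r‖ₑ * eLpNorm cos s pmu ≤ eLpNorm (fun v => r * cos v - l) s pmu := by
  have h1 : eLpNorm (fun v => r * cos v + l) s pmu = eLpNorm (fun v => r * cos v - l) s pmu := by
    rw [← pnorm_shift hs hs' (fun v => r * cos v - l)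
      (fun t => by simp only [cos_add_two_pi]) π, ← eLpNorm_neg]
    congr 1
    funext v
    simp only [cos_add_pi, Pi.neg_apply]
    ring
  have h2 : eLpNorm (fun v => (2 * r) * cos v) s pmu ≤
      eLpNorm (fun v => r * cos v - l) s pmu + eLpNorm (fun v => r * cos v + l) s pmu := by
    refine le_trans (le_of_eq ?_) (eLpNorm_add_le (by fun_prop) (by fun_prop) hs)
    congr 1
    funext v
    simp only [Pi.add_apply]
    ring
  rw [h1, pnorm_mul_cos, enorm_mul, ← two_mul, mul_assoc] at h2
  have h3 : ‖(2:ℝ)‖ₑ = 2 := by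
    rw [Real.enorm_eq_ofReal (by norm_num)]; norm_num
  rw [h3] at h2
  exact (ENNReal.mul_le_mul_iff_right (by norm_num) (by norm_num)).1 h2

lemma cont_fin (s : ℝ≥0∞) {f : ℝ → ℝ} (hf : Continuous f) : eLpNorm f s pmu ≠ ∞ := by
  obtain ⟨C, hC⟩ := (isCompact_Icc (a := -π) (b := π)).exists_bound_of_continuousOn hf.continuousOn
  have : MemLp f s pmu := MemLp.of_bound (by fun_prop) C
    ((ae_restrict_iff' measurableSet_Ioc).2 (Eventually.of_forall fun t ht =>
      hC t (Set.Ioc_subset_Icc_self ht)))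
  exact this.2.ne

lemma sup_bound {f : ℝ → ℝ} (hf : Continuous f) (hp : ∀ t, f (t + 2 * π) = f t) (t : ℝ) :
    |f t| ≤ (eLpNorm f ∞ pmu).toReal := by
  set N := (eLpNorm f ∞ pmu).toReal with hN
  have h1 : ∀ᵐ y ∂pmu, |f y| ≤ N := by
    rw [eLpNorm_exponent_top] at hN
    have hfin := cont_fin ∞ hf
    rw [eLpNorm_exponent_top] at hfin
    filter_upwards [ae_le_eLpNormEssSup (f := f) (μ := pmu)] with y hy
    have := ENNReal.toReal_mono hfin hy
    simpa [hN] using this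
  have hcl : IsClosed {y | |f y| ≤ N} := isClosed_le (by fun_prop) (by fun_prop)
  have h2 : Set.Ioo (-π) π ⊆ {y | |f y| ≤ N} := by
    have ho : IsOpen (Set.Ioo (-π) π ∩ {y | |f y| ≤ N}ᶜ) := isOpen_Ioo.inter hcl.isOpen_compl
    have hz : volume (Set.Ioo (-π) π ∩ {y | |f y| ≤ N}ᶜ) = 0 := by
      have h3 : pmu ({y | |f y| ≤ N}ᶜ) = 0 := h1
      rw [Measure.restrict_apply hcl.isOpen_compl.measurableSet] at h3
      refine measure_mono_null ?_ h3
      intro y hy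
      exact ⟨hy.2, Set.Ioo_subset_Ioc_self hy.1⟩
    have := (ho.measure_eq_zero_iff volume).1 hz
    intro y hy
    by_contra hc
    have : y ∈ (∅ : Set ℝ) := this ▸ ⟨hy, hc⟩
    exact this
  have h3 : Set.Icc (-π) π ⊆ {y | |f y| ≤ N} := by
    rw [← closure_Ioo (by linarith [pi_pos] : -π ≠ π)]
    exact closure_minimal h2 hcl
  have hper : Function.Periodic f (2 * π) := hp
  obtain ⟨y, hy, hxy⟩ := hper.exists_mem_Ico (by positivity) t (-π)
  rw [hxy]
  refine h3 ⟨hy.1, ?_⟩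
  have := hy.2
  linarith

lemma gron (z : ℝ → ℂ) (hz : Differentiable ℝ z) (M : ℝ) (hM : 0 ≤ M) (hb : ∀ t, ‖deriv z t‖ ≤ M * ‖z t‖)
    (t u : ℝ) (hu : 0 ≤ u) : ‖z (t + u) - z t‖ ≤ ‖z t‖ * (exp (M * u) - 1) := by
  have key := norm_le_gronwallBound_of_norm_deriv_right_le (f := fun x => z (t + x) - z t)
    (f' := fun x => deriv z (t + x)) (δ := 0) (K := M) (ε := M * ‖z t‖) (a := 0) (b := u)
    ((hz.continuous.comp (continuous_const.add continuous_id)).sub continuous_const).continuousOn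
    (fun x _ => by
      have := ((hz (t + x)).hasDerivAt.comp_const_add t x).sub_const (z t)
      exact this.hasDerivWithinAt)
    (by simp) (fun x _ => by
      have h1 : ‖z (t + x)‖ ≤ ‖z (t + x) - z t‖ + ‖z t‖ := by
        simpa using norm_add_le (z (t + x) - z t) (z t)
      have h2 := mul_le_mul_of_nonneg_left h1 hM
      rw [mul_add] at h2
      exact (hb (t + x)).trans h2) u ⟨hu, le_rfl⟩
  simp only [sub_zero] at key
  refine key.trans (le_of_eq ?_)
  by_cases hM : M = 0
  · subst hM; simp [gronwallBound_K0]
  · rw [gronwallBound_of_K_ne_0 hM]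
    field_simp
    ring

lemma gron2 (z : ℝ → ℂ) (hz : Differentiable ℝ z) (M : ℝ) (hM : 0 ≤ M)
    (hb : ∀ t, ‖deriv z t‖ ≤ M * ‖z t‖)
    (t u : ℝ) : ‖z (t + u) - z t‖ ≤ ‖z t‖ * (exp (M * |u|) - 1) := by
  rcases le_total 0 u with hu | hu
  · rw [abs_of_nonneg hu]; exact gron z hz M hM hb t u hu
  · rw [abs_of_nonpos hu]
    have := gron (fun x => z (-x)) (hz.comp differentiable_neg) M hM
      (fun x => by rw [deriv_comp_neg, norm_neg]; exact hb _) (-t) (-u) (by linarith)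
    simpa [add_comm] using this

lemma cs (a b x : ℝ) : |a * cos x + b * sin x| ≤ √(a ^ 2 + b ^ 2) := by
  apply Real.abs_le_sqrt
  nlinarith [sq_nonneg (a * sin x - b * cos x), sin_sq_add_cos_sq x]

/-- the comparison function -/
noncomputable def Ph (g h : ℝ → ℝ) (γ : ℝ) (n : ℕ) (t v : ℝ) : ℝ :=
  g t * cos (n * t + γ + v) + h t * sin (n * t + γ + v)

/-- the original function -/
noncomputable def ph (g h : ℝ → ℝ) (γ : ℝ) (n : ℕ) (t : ℝ) : ℝ :=
  g t * cos (n * t + γ) + h t * sin (n * t + γ)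

/-- the amplitude -/
noncomputable def rr (g h : ℝ → ℝ) (t : ℝ) : ℝ := √(g t ^ 2 + h t ^ 2)

lemma ph_per {g h : ℝ → ℝ} (hgper : ∀ t, g (t + 2 * π) = g t) (hhper : ∀ t, h (t + 2 * π) = h t)
    (γ : ℝ) (n : ℕ) (t : ℝ) : ph g h γ n (t + 2 * π) = ph g h γ n t := by
  have e : (n:ℝ) * (t + 2 * π) + γ = n * t + γ + n * (2 * π) := by ring
  rw [ph, ph, hgper, hhper, e, cos_add_nat_mul_two_pi, sin_add_nat_mul_two_pi]

lemma pt_err {g h : ℝ → ℝ} (hg : Differentiable ℝ g) (hh : Differentiable ℝ h) {M : ℝ}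
    (hM : 0 ≤ M) (hb : ∀ t, √(deriv g t ^ 2 + deriv h t ^ 2) ≤ M * rr g h t)
    (γ : ℝ) {n : ℕ} (hn : 1 ≤ n) (t v : ℝ) (hv : |v| ≤ π) :
    |ph g h γ n (t + v / n) - Ph g h γ n t v| ≤ (exp (π * M / n) - 1) * rr g h t := by
  have hn0 : (0:ℝ) < n := by exact_mod_cast hn
  let z : ℝ → ℂ := fun t => g t + h t * Complex.I
  have nrm : ∀ a b : ℝ, ‖(a:ℂ) + b * Complex.I‖ = √(a ^ 2 + b ^ 2) := fun a b =>
    Complex.norm_add_mul_I a b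
  have hd : ∀ t, HasDerivAt z (deriv g t + deriv h t * Complex.I) t := fun t =>
    (hg t).hasDerivAt.ofReal_comp.add ((hh t).hasDerivAt.ofReal_comp.mul_const _)
  have key := gron2 z (fun t => (hd t).differentiableAt) M hM (fun t => by
    rw [(hd t).deriv, nrm]; simp only [z, nrm]; exact hb t) t (v / n)
  have e1 : z (t + v / n) - z t = ((g (t + v / n) - g t : ℝ) : ℂ)
      + ((h (t + v / n) - h t : ℝ) : ℂ) * Complex.I := by
    simp only [z]; push_cast; ring
  rw [e1, nrm] at key
  have e2 : ph g h γ n (t + v / n) - Ph g h γ n t v =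
      (g (t + v / n) - g t) * cos (n * t + γ + v) + (h (t + v / n) - h t) * sin (n * t + γ + v) := by
    have : (n:ℝ) * (t + v / n) + γ = n * t + γ + v := by field_simp; ring
    rw [ph, Ph, this]; ring
  rw [e2]
  refine (cs _ _ _).trans (key.trans ?_)
  simp only [z, nrm]
  rw [mul_comm]
  refine mul_le_mul_of_nonneg_right ?_ (Real.sqrt_nonneg _)
  have : M * |v / n| ≤ π * M / n := by
    rw [abs_div, abs_of_pos hn0, mul_div_assoc', mul_comm π]
    gcongr
  gcongr

lemma Ph_le {g h : ℝ → ℝ} (hg : Continuous g) (hh : Continuous h) (γ : ℝ) (n : ℕ)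
    (hgper : ∀ t, g (t + 2 * π) = g t) (hhper : ∀ t, h (t + 2 * π) = h t)
    {e : ℝ} {s : ℝ≥0∞} (hs : 1 ≤ s) (hs' : s ≠ ∞) (l v : ℝ)
    (he : ∀ t, |ph g h γ n (t + v / n) - Ph g h γ n t v| ≤ e * rr g h t) :
    eLpNorm (fun t => Ph g h γ n t v - l) s pmu ≤
      eLpNorm (fun t => ph g h γ n t - l) s pmu + ENNReal.ofReal e * eLpNorm (rr g h) s pmu ∧
    eLpNorm (fun t => ph g h γ n t - l) s pmu ≤
      eLpNorm (fun t => Ph g h γ n t v - l) s pmu + ENNReal.ofReal e * eLpNorm (rr g h) s pmu := by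
  have c1 : Continuous (ph g h γ n) := by unfold ph; fun_prop
  have c2 : Continuous (fun t => Ph g h γ n t v) := by unfold Ph; fun_prop
  have hr0 : ∀ t, 0 ≤ rr g h t := fun t => Real.sqrt_nonneg _
  rw [← pnorm_shift hs hs' (fun t => ph g h γ n t - l)
    (fun t => by simp only [ph_per hgper hhper]) (v / n)]
  have d1 : eLpNorm (fun t => Ph g h γ n t v - ph g h γ n (t + v / n)) s pmu ≤
      ENNReal.ofReal e * eLpNorm (rr g h) s pmu :=
    eLpNorm_le_mul_eLpNorm_of_ae_le_mul (Eventually.of_forall fun t => by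
      rw [Real.norm_eq_abs, Real.norm_eq_abs, abs_of_nonneg (hr0 t), abs_sub_comm]; exact he t) s
  have d2 : eLpNorm (fun t => ph g h γ n (t + v / n) - Ph g h γ n t v) s pmu ≤
      ENNReal.ofReal e * eLpNorm (rr g h) s pmu :=
    eLpNorm_le_mul_eLpNorm_of_ae_le_mul (Eventually.of_forall fun t => by
      rw [Real.norm_eq_abs, Real.norm_eq_abs, abs_of_nonneg (hr0 t)]; exact he t) s
  constructor
  · refine le_trans (le_trans (le_of_eq ?_) (eLpNorm_add_le (f := fun t => ph g h γ n (t + v / n) - l)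
      (g := fun t => Ph g h γ n t v - ph g h γ n (t + v / n)) (by fun_prop) (by fun_prop) hs))
      (add_le_add_right d1 _)
    congr 1
    funext t
    simp only [Pi.add_apply]
    ring
  · refine le_trans (le_trans (le_of_eq ?_) (eLpNorm_add_le (f := fun t => Ph g h γ n t v - l)
      (g := fun t => ph g h γ n (t + v / n) - Ph g h γ n t v) (by fun_prop) (by fun_prop) hs))
      (add_le_add_right d2 _)
    congr 1
    funext t
    simp only [Pi.add_apply]
    ring

lemma double {g h : ℝ → ℝ} (hg : Continuous g) (hh : Continuous h) (γ : ℝ) (n : ℕ)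
    {s : ℝ≥0∞} (hs : 1 ≤ s) (hs' : s ≠ ∞) (l : ℝ) :
    ∫⁻ v, eLpNorm (fun t => Ph g h γ n t v - l) s pmu ^ s.toReal ∂pmu =
      ∫⁻ t, eLpNorm (fun v => rr g h t * cos v - l) s pmu ^ s.toReal ∂pmu := by
  simp only [pnorm_rpow hs hs']
  rw [lintegral_lintegral_swap]
  · refine lintegral_congr fun t => ?_
    have := inner_eq hs hs' (g t) (h t) (n * t + γ) l
    have h2 := congrArg (fun x => x ^ s.toReal) this
    simp only [pnorm_rpow hs hs'] at h2
    exact h2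
  · have : Continuous (fun p : ℝ × ℝ => Ph g h γ n p.2 p.1 - l) := by unfold Ph; fun_prop
    have h3 : Measurable (fun p : ℝ × ℝ => ‖Ph g h γ n p.2 p.1 - l‖ₑ ^ s.toReal) := by
      have := this.measurable
      fun_prop
    exact h3.aemeasurable

lemma rr_int {g h : ℝ → ℝ} (hg : Continuous g) (hh : Continuous h)
    {s : ℝ≥0∞} (hs : 1 ≤ s) (hs' : s ≠ ∞) :
    ∫⁻ t, (‖rr g h t‖ₑ * eLpNorm cos s pmu) ^ s.toReal ∂pmu =
      (eLpNorm (rr g h) s pmu * eLpNorm cos s pmu) ^ s.toReal := by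
  have hp : 0 ≤ s.toReal := ENNReal.toReal_nonneg
  have c : Continuous (rr g h) := by unfold rr; fun_prop
  simp only [ENNReal.mul_rpow_of_nonneg _ _ hp]
  rw [lintegral_mul_const _ (by have := c.measurable; fun_prop), pnorm_rpow hs hs' (rr g h)]

lemma lower {g h : ℝ → ℝ} (hg : Continuous g) (hh : Continuous h) (γ : ℝ) (n : ℕ)
    (hgper : ∀ t, g (t + 2 * π) = g t) (hhper : ∀ t, h (t + 2 * π) = h t)
    {e : ℝ} {s : ℝ≥0∞} (hs : 1 ≤ s) (hs' : s ≠ ∞) (l : ℝ)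
    (he : ∀ t v, |v| ≤ π → |ph g h γ n (t + v / n) - Ph g h γ n t v| ≤ e * rr g h t) :
    (eLpNorm (rr g h) s pmu * eLpNorm cos s pmu) ^ s.toReal ≤
     (eLpNorm (fun t => ph g h γ n t - l) s pmu + ENNReal.ofReal e * eLpNorm (rr g h) s pmu)
      ^ s.toReal * ENNReal.ofReal (2 * π) := by
  have hp : 0 ≤ s.toReal := ENNReal.toReal_nonneg
  calc _ = ∫⁻ t, (‖rr g h t‖ₑ * eLpNorm cos s pmu) ^ s.toReal ∂pmu := (rr_int hg hh hs hs').symm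
    _ ≤ ∫⁻ t, eLpNorm (fun v => rr g h t * cos v - l) s pmu ^ s.toReal ∂pmu :=
      lintegral_mono fun t => ENNReal.rpow_le_rpow (cos_sub_ge hs hs' _ _) hp
    _ = ∫⁻ v, eLpNorm (fun t => Ph g h γ n t v - l) s pmu ^ s.toReal ∂pmu :=
      (double hg hh γ n hs hs' l).symm
    _ ≤ ∫⁻ v, (eLpNorm (fun t => ph g h γ n t - l) s pmu
        + ENNReal.ofReal e * eLpNorm (rr g h) s pmu) ^ s.toReal ∂pmu := by
      refine setLIntegral_mono measurable_const fun v hv => ENNReal.rpow_le_rpow ?_ hp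
      exact (Ph_le hg hh γ n hgper hhper hs hs' l v
        (fun t => he t v (abs_le.2 ⟨hv.1.le, hv.2⟩))).1
    _ = _ := by
      rw [setLIntegral_const, Real.volume_Ioc]
      congr 2; ring

lemma upper {g h : ℝ → ℝ} (hg : Continuous g) (hh : Continuous h) (γ : ℝ) (n : ℕ)
    (hgper : ∀ t, g (t + 2 * π) = g t) (hhper : ∀ t, h (t + 2 * π) = h t)
    {e : ℝ} {s : ℝ≥0∞} (hs : 1 ≤ s) (hs' : s ≠ ∞)
    (he : ∀ t v, |v| ≤ π → |ph g h γ n (t + v / n) - Ph g h γ n t v| ≤ e * rr g h t) :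
     (eLpNorm (fun t => ph g h γ n t - 0) s pmu - ENNReal.ofReal e * eLpNorm (rr g h) s pmu)
      ^ s.toReal * ENNReal.ofReal (2 * π) ≤
    (eLpNorm (rr g h) s pmu * eLpNorm cos s pmu) ^ s.toReal := by
  have hp : 0 ≤ s.toReal := ENNReal.toReal_nonneg
  calc _ = ∫⁻ v, (eLpNorm (fun t => ph g h γ n t - 0) s pmu
        - ENNReal.ofReal e * eLpNorm (rr g h) s pmu) ^ s.toReal ∂pmu := by
        rw [setLIntegral_const, Real.volume_Ioc]
        congr 2; ring
    _ ≤ ∫⁻ v, eLpNorm (fun t => Ph g h γ n t v - 0) s pmu ^ s.toReal ∂pmu := by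
      refine setLIntegral_mono' measurableSet_Ioc fun v hv => ENNReal.rpow_le_rpow ?_ hp
      exact tsub_le_iff_right.2 (Ph_le hg hh γ n hgper hhper hs hs' 0 v
        (fun t => he t v (abs_le.2 ⟨hv.1.le, hv.2⟩))).2
    _ = ∫⁻ t, eLpNorm (fun v => rr g h t * cos v - 0) s pmu ^ s.toReal ∂pmu :=
      double hg hh γ n hs hs' 0
    _ = ∫⁻ t, (‖rr g h t‖ₑ * eLpNorm cos s pmu) ^ s.toReal ∂pmu := by
      simp only [sub_zero, pnorm_mul_cos]
    _ = _ := rr_int hg hh hs hs'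

lemma root_aux {p a b : ℝ} (hp : 0 < p) (ha : 0 ≤ a) (hb : 0 ≤ b) :
    (a ^ p ≤ b ^ p * (2 * π) → a / (2 * π) ^ (1 / p) ≤ b) ∧
    (b ^ p * (2 * π) ≤ a ^ p → b ≤ a / (2 * π) ^ (1 / p)) := by
  have hpi : (0:ℝ) < 2 * π := by positivity
  have hq : 0 < (2 * π) ^ (1 / p) := by positivity
  have e : b ^ p * (2 * π) = (b * (2 * π) ^ (1 / p)) ^ p := by
    rw [Real.mul_rpow hb hq.le, ← Real.rpow_mul hpi.le, one_div_mul_cancel hp.ne', Real.rpow_one]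
  rw [e, Real.rpow_le_rpow_iff ha (by positivity) hp, Real.rpow_le_rpow_iff (by positivity) ha hp,
    div_le_iff₀ hq, le_div_iff₀ hq]
  exact ⟨id, id⟩

/-- finite exponent bounds, in real numbers -/
lemma real_bounds {g h : ℝ → ℝ} (hg : Continuous g) (hh : Continuous h) (γ : ℝ) (n : ℕ)
    (hgper : ∀ t, g (t + 2 * π) = g t) (hhper : ∀ t, h (t + 2 * π) = h t)
    {e : ℝ} (he0 : 0 ≤ e) {s : ℝ≥0∞} (hs : 1 ≤ s) (hs' : s ≠ ∞)
    (he : ∀ t v, |v| ≤ π → |ph g h γ n (t + v / n) - Ph g h γ n t v| ≤ e * rr g h t) :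
    (∀ l, periodNorm s (rr g h) * (periodNorm s cos / (2 * π) ^ (1 / s.toReal)) -
      e * periodNorm s (rr g h) ≤ periodNorm s (fun t => ph g h γ n t - l)) ∧
    periodNorm s (fun t => ph g h γ n t - 0) ≤
      periodNorm s (rr g h) * (periodNorm s cos / (2 * π) ^ (1 / s.toReal)) +
        e * periodNorm s (rr g h) := by
  have h0 : s ≠ 0 := (lt_of_lt_of_le one_pos hs).ne'
  have hp : 0 < s.toReal := ENNReal.toReal_pos h0 hs'
  have c1 : Continuous (ph g h γ n) := by unfold ph; fun_prop
  have c2 : Continuous (rr g h) := by unfold rr; fun_prop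
  have f2 := cont_fin s c2
  have f3 := cont_fin s continuous_cos
  have hE : ENNReal.ofReal e * eLpNorm (rr g h) s pmu ≠ ∞ :=
    ENNReal.mul_ne_top ENNReal.ofReal_ne_top f2
  have hpi : (0:ℝ) ≤ 2 * π := by positivity
  have hEr : (ENNReal.ofReal e * eLpNorm (rr g h) s pmu).toReal = e * periodNorm s (rr g h) := by
    rw [ENNReal.toReal_mul, ENNReal.toReal_ofReal he0]; rfl
  have hRC : ((eLpNorm (rr g h) s pmu * eLpNorm cos s pmu) ^ s.toReal).toReal =
      (periodNorm s (rr g h) * periodNorm s cos) ^ s.toReal := by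
    rw [← ENNReal.toReal_rpow, ENNReal.toReal_mul]; rfl
  have hR0 : 0 ≤ periodNorm s (rr g h) := ENNReal.toReal_nonneg
  have hC0 : 0 ≤ periodNorm s cos := ENNReal.toReal_nonneg
  constructor
  · intro l
    have f1 := cont_fin s (c1.sub (continuous_const (y := l)))
    have k := lower hg hh γ n hgper hhper hs hs' l he
    have k2 := ENNReal.toReal_mono (ENNReal.mul_ne_top (ENNReal.rpow_ne_top_of_nonneg hp.le
      (ENNReal.add_ne_top.2 ⟨f1, hE⟩)) ENNReal.ofReal_ne_top) k
    rw [hRC, ENNReal.toReal_mul, ENNReal.toReal_ofReal hpi, ← ENNReal.toReal_rpow,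
      ENNReal.toReal_add f1 hE, hEr] at k2
    have := (root_aux hp (by positivity) (by positivity)).1 k2
    rw [mul_div_assoc] at this
    change _ ≤ periodNorm s (fun t => ph g h γ n t - l) + _ at this
    linarith
  · have f1 := cont_fin s (c1.sub (continuous_const (y := 0)))
    have k := upper hg hh γ n hgper hhper hs hs' he
    have k2 := ENNReal.toReal_mono (ENNReal.rpow_ne_top_of_nonneg hp.le
      (ENNReal.mul_ne_top f2 f3)) k
    rw [hRC, ENNReal.toReal_mul, ENNReal.toReal_ofReal hpi, ← ENNReal.toReal_rpow] at k2
    have := (root_aux hp (by positivity) (by positivity)).2 k2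
    rw [mul_div_assoc] at this
    have k3 := ENNReal.le_toReal_sub (a := eLpNorm (fun t => ph g h γ n t - 0) s pmu) hE
    rw [hEr] at k3
    change periodNorm s (fun t => ph g h γ n t - 0) - _ ≤ _ at k3
    linarith

lemma cos_top : periodNorm ∞ cos = 1 := by
  apply le_antisymm
  · have : eLpNorm cos ∞ pmu ≤ ENNReal.ofReal 1 := by
      rw [eLpNorm_exponent_top]
      exact eLpNormEssSup_le_of_ae_bound (Eventually.of_forall fun t => abs_cos_le_one t)
    have := ENNReal.toReal_mono ENNReal.ofReal_ne_top this
    simpa [periodNorm] using this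
  · have := sup_bound continuous_cos cos_add_two_pi 0
    simpa [periodNorm] using this

/-- sup-norm bounds -/
lemma top_bounds {g h : ℝ → ℝ} (hg : Continuous g) (hh : Continuous h) (γ : ℝ) (n : ℕ)
    (hgper : ∀ t, g (t + 2 * π) = g t) (hhper : ∀ t, h (t + 2 * π) = h t)
    {e : ℝ} (he0 : 0 ≤ e)
    (he : ∀ t v, |v| ≤ π → |ph g h γ n (t + v / n) - Ph g h γ n t v| ≤ e * rr g h t) :
    (∀ l, periodNorm ∞ (rr g h) - e * periodNorm ∞ (rr g h) ≤
      periodNorm ∞ (fun t => ph g h γ n t - l)) ∧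
    periodNorm ∞ (fun t => ph g h γ n t - 0) ≤ periodNorm ∞ (rr g h) := by
  have c1 : Continuous (ph g h γ n) := by unfold ph; fun_prop
  have c2 : Continuous (rr g h) := by unfold rr; fun_prop
  have hr0 : ∀ t, 0 ≤ rr g h t := fun t => Real.sqrt_nonneg _
  have hR0 : 0 ≤ periodNorm ∞ (rr g h) := ENNReal.toReal_nonneg
  have hrR : ∀ t, rr g h t ≤ periodNorm ∞ (rr g h) := fun t =>
    (le_abs_self _).trans (sup_bound c2 (fun t => by simp only [rr, hgper, hhper]) t)
  have le_of : ∀ {f : ℝ → ℝ} {C : ℝ}, 0 ≤ C → (∀ t, |f t| ≤ C) → periodNorm ∞ f ≤ C := by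
    intro f C hC hf
    have : eLpNorm f ∞ pmu ≤ ENNReal.ofReal C := by
      rw [eLpNorm_exponent_top]
      exact eLpNormEssSup_le_of_ae_bound (Eventually.of_forall fun t => hf t)
    have := ENNReal.toReal_mono ENNReal.ofReal_ne_top this
    rwa [ENNReal.toReal_ofReal hC] at this
  constructor
  · intro l
    have hN : ∀ t, |ph g h γ n t - l| ≤ periodNorm ∞ (fun t => ph g h γ n t - l) := fun t =>
      sup_bound (f := fun t => ph g h γ n t - l) (by fun_prop)
        (fun t => by simp only [ph_per hgper hhper]) t
    set N := periodNorm ∞ (fun t => ph g h γ n t - l)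
    have hN0 : 0 ≤ N := (abs_nonneg _).trans (hN 0)
    have : periodNorm ∞ (rr g h) ≤ N + e * periodNorm ∞ (rr g h) := by
      refine le_of (by positivity) fun t => ?_
      rw [abs_of_nonneg (hr0 t)]
      obtain ⟨β, hβ⟩ := polar (g t) (h t)
      have hx : ∀ y : ℝ, ∃ v, |v| ≤ π ∧ cos (n * t + γ + v + β) = cos y := by
        intro y
        have hc : Function.Periodic (fun v => cos (n * t + γ + v + β)) (2 * π) := fun v => by
          have : n * t + γ + (v + 2 * π) + β = n * t + γ + v + β + 2 * π := by ring
          simp only [this, cos_add_two_pi]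
        obtain ⟨v, hv, hv2⟩ := hc.exists_mem_Ico (by positivity) (y - (n * t + γ + β)) (-π)
        refine ⟨v, abs_le.2 ⟨hv.1, by linarith [hv.2]⟩, ?_⟩
        rw [← hv2]; congr 1; ring
      obtain ⟨v1, hv1, e1⟩ := hx 0
      obtain ⟨v2, hv2, e2⟩ := hx π
      have a1 := he t v1 hv1
      have a2 := he t v2 hv2
      have b1 := hN (t + v1 / n)
      have b2 := hN (t + v2 / n)
      rw [Ph, hβ, e1, cos_zero] at a1
      rw [Ph, hβ, e2, cos_pi] at a2
      change |_ - rr g h t * 1| ≤ _ at a1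
      change |_ - rr g h t * (-1)| ≤ _ at a2
      have h5 := mul_le_mul_of_nonneg_left (hrR t) he0
      rw [abs_le] at a1 a2 b1 b2
      linarith [a1.1, a2.2, b1.2, b2.1]
    linarith
  · refine le_of hR0 fun t => ?_
    rw [sub_zero]
    exact (cs _ _ _).trans (hrR t)

lemma finish {I R c x K : ℝ} (hK : 0 < K) (hR : 0 ≤ R) (hx : 0 ≤ x) (hlt : K < 14 * π)
    (hd : |I - R * c| ≤ K * (R * x)) : ∃ δ : ℝ, |δ| < 14 * π ∧ I = R * (c + δ * x) := by
  by_cases h0 : R * x = 0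
  · refine ⟨0, by simp; positivity, ?_⟩
    rw [h0, mul_zero] at hd
    have := abs_nonpos_iff.1 hd
    linarith
  · have hpos : 0 < R * x := lt_of_le_of_ne (by positivity) (Ne.symm h0)
    refine ⟨(I - R * c) / (R * x), ?_, ?_⟩
    · rw [abs_div, abs_of_pos hpos]
      exact lt_of_le_of_lt ((div_le_iff₀ hpos).2 hd) hlt
    · have : (I - R * c) / (R * x) * (R * x) = I - R * c := div_mul_cancel₀ _ h0
      linear_combination -this

lemma exp_aux {x : ℝ} (h0 : 0 ≤ x) (h1 : x ≤ 1) : exp x - 1 ≤ 2 * x := by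
  have := Real.abs_exp_sub_one_le (x := x) (by rwa [abs_of_nonneg h0])
  rw [abs_of_nonneg h0] at this
  exact (le_abs_self _).trans this

theorem statement7 (s : ℝ≥0∞) (hs : 1 ≤ s) (g h : ℝ → ℝ)
    (hgper : ∀ t, g (t + 2 * π) = g t) (hhper : ∀ t, h (t + 2 * π) = h t)
    (hg : Differentiable ℝ g) (hh : Differentiable ℝ h)
    (hr : ∀ t, Real.sqrt (g t ^ 2 + h t ^ 2) ≠ 0)
    (hMb : BddAbove (Set.range fun t =>
      Real.sqrt (deriv g t ^ 2 + deriv h t ^ 2) / Real.sqrt (g t ^ 2 + h t ^ 2)))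
    (M : ℝ)
    (hM : M = ⨆ t : ℝ, Real.sqrt (deriv g t ^ 2 + deriv h t ^ 2) / Real.sqrt (g t ^ 2 + h t ^ 2))
    (γ : ℝ) (n : ℕ) (hn1 : 1 ≤ n)
    (hn : s ≠ ∞ → 4 * π * s.toReal * M ≤ (n : ℝ)) :
    ∃ δ : ℝ, |δ| < 14 * π ∧
      (⨅ l : ℝ, periodNorm s
          (fun t => g t * Real.cos (n * t + γ) + h t * Real.sin (n * t + γ) - l)) =
        periodNorm s (fun t => Real.sqrt (g t ^ 2 + h t ^ 2)) *
          (periodNorm s Real.cos / (2 * π) ^ (1 / s.toReal) + δ * M / n) := by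
  have hn0 : (0:ℝ) < n := by exact_mod_cast hn1
  have hr0 : ∀ t, 0 < √(g t ^ 2 + h t ^ 2) := fun t =>
    lt_of_le_of_ne (Real.sqrt_nonneg _) (Ne.symm (hr t))
  have hle : ∀ t, √(deriv g t ^ 2 + deriv h t ^ 2) / √(g t ^ 2 + h t ^ 2) ≤ M := fun t => by
    rw [hM]; exact le_ciSup hMb t
  have hM0 : 0 ≤ M := le_trans (by positivity) (hle 0)
  have hb : ∀ t, √(deriv g t ^ 2 + deriv h t ^ 2) ≤ M * rr g h t := fun t =>
    (div_le_iff₀ (hr0 t)).1 (hle t)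
  have he := fun t v hv => pt_err hg hh hM0 hb γ hn1 t v hv
  have hgc := hg.continuous
  have hhc := hh.continuous
  have hx0 : 0 ≤ π * M / n := by positivity
  have he0 : 0 ≤ exp (π * M / n) - 1 := by
    have := Real.one_le_exp hx0
    linarith
  have hR0 : 0 ≤ periodNorm s (rr g h) := ENNReal.toReal_nonneg
  have hy0 : 0 ≤ M / n := by positivity
  change ∃ δ : ℝ, |δ| < 14 * π ∧ (⨅ l : ℝ, periodNorm s (fun t => ph g h γ n t - l)) =
        periodNorm s (rr g h) *
          (periodNorm s Real.cos / (2 * π) ^ (1 / s.toReal) + δ * M / n)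
  simp only [mul_div_assoc]
  refine finish (K := 4 * π) (by positivity) hR0 hy0 (by linarith [pi_pos]) ?_
  have hbd : BddBelow (Set.range fun l : ℝ => periodNorm s (fun t => ph g h γ n t - l)) :=
    ⟨0, by rintro _ ⟨l, rfl⟩; exact ENNReal.toReal_nonneg⟩
  have hup := ciInf_le hbd 0
  have hI0 : 0 ≤ ⨅ l : ℝ, periodNorm s (fun t => ph g h γ n t - l) :=
    le_ciInf fun l => ENNReal.toReal_nonneg
  have small : π * M / n ≤ 1 → (exp (π * M / n) - 1) * periodNorm s (rr g h) ≤
      4 * π * (periodNorm s (rr g h) * (M / n)) := by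
    intro h1
    have h2 := mul_le_mul_of_nonneg_right (exp_aux hx0 h1) hR0
    have h3 : 2 * (π * M / n) * periodNorm s (rr g h) =
      2 * π * (periodNorm s (rr g h) * (M / n)) := by ring
    have h4 : 0 ≤ π * (periodNorm s (rr g h) * (M / n)) := by positivity
    linarith
  by_cases hs' : s = ∞
  · subst hs'
    obtain ⟨k1, k2⟩ := top_bounds hgc hhc γ n hgper hhper he0 he
    have k3 := le_ciInf k1
    have hc : periodNorm ∞ cos / (2 * π) ^ (1 / (∞ : ℝ≥0∞).toReal) = 1 := by
      simp [cos_top]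
    rw [hc, mul_one, abs_le]
    have h4 : 0 ≤ π * (periodNorm ∞ (rr g h) * (M / n)) := by positivity
    refine ⟨?_, by linarith⟩
    rcases le_total (π * M / n) 1 with h1 | h1
    · linarith [small h1]
    · have h5 := mul_le_mul_of_nonneg_right h1 hR0
      have h6 : π * M / n * periodNorm ∞ (rr g h) = π * (periodNorm ∞ (rr g h) * (M / n)) := by
        ring
      linarith
  · obtain ⟨k1, k2⟩ := real_bounds hgc hhc γ n hgper hhper he0 hs hs' he
    have k3 := le_ciInf k1
    have h1 : π * M / n ≤ 1 := by
      rw [div_le_one hn0]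
      have h2 := hn hs'
      have h3 : 1 ≤ s.toReal := by
        have := ENNReal.toReal_mono hs' hs
        simpa using this
      have h4 : 0 ≤ π * M := by positivity
      nlinarith
    have := small h1
    rw [abs_le]
    constructor <;> linarith
end

section
/- Let 1≤s≤∞, and let g(t), h(t) be 2π-periodic functions having finite derivatives and satisfying r(t) := √(g²(t)+h²(t)) ≠ 0 for all t and M := sup_{t∈ℝ} √((g'(t))²+(h'(t))²) / √(g²(t)+h²(t)) < ∞. Let φ(t) = g(t)cos(nt+γ) + h(t)sin(nt+γ) with γ∈ℝ, n∈ℕ. Then for all n ≥ 4πsM if 1≤s<∞ (and all n≥1 if s=∞), one has sup_{h'∈ℝ} (1/2)‖φ(·+h') − φ(·)‖_s = ‖r‖_s ( ‖cos t‖_s/(2π)^{1/s} + δ_n M/n ), where |δ_n| < 14π. -/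
open MeasureTheory Real Filter
open scoped ENNReal

lemma pn_memLp (s : ℝ≥0∞) {f : ℝ → ℝ} (hf : Continuous f) :
    MemLp f s (volume.restrict (Set.Ioc (-π) π)) := by
  obtain ⟨C, hC⟩ := (isCompact_Icc (a := -π) (b := π)).exists_bound_of_continuousOn hf.continuousOn
  refine MemLp.of_bound hf.aestronglyMeasurable C ?_
  filter_upwards [ae_restrict_mem measurableSet_Ioc] with x hx
  exact hC x (Set.Ioc_subset_Icc_self hx)

lemma pn_add_le (s : ℝ≥0∞) (hs : 1 ≤ s) {f g : ℝ → ℝ} (hf : Continuous f) (hg : Continuous g) :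
    periodNorm s (fun t => f t + g t) ≤ periodNorm s f + periodNorm s g := by
  unfold periodNorm
  rw [← ENNReal.toReal_add (pn_memLp s hf).2.ne (pn_memLp s hg).2.ne]
  refine ENNReal.toReal_mono (ENNReal.add_ne_top.2 ⟨(pn_memLp s hf).2.ne, (pn_memLp s hg).2.ne⟩) ?_
  exact eLpNorm_add_le hf.aestronglyMeasurable hg.aestronglyMeasurable hs

lemma pn_mono (s : ℝ≥0∞) {f g : ℝ → ℝ} (hg : Continuous g) (h : ∀ t, |f t| ≤ g t) :
    periodNorm s f ≤ periodNorm s g := by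
  unfold periodNorm
  exact ENNReal.toReal_mono (pn_memLp s hg).2.ne (eLpNorm_mono_real h)

lemma pn_const_mul (s : ℝ≥0∞) (c : ℝ) (f : ℝ → ℝ) :
    periodNorm s (fun t => c * f t) = |c| * periodNorm s f := by
  unfold periodNorm
  have := eLpNorm_const_smul c f s (volume.restrict (Set.Ioc (-π) π))
  rw [show (fun t => c * f t) = c • f from rfl, this, ENNReal.toReal_mul]
  simp

lemma pn_nonneg (s : ℝ≥0∞) (f : ℝ → ℝ) : 0 ≤ periodNorm s f := ENNReal.toReal_nonneg

lemma eLp_shift (s : ℝ≥0∞) {f : ℝ → ℝ} (hf : Continuous f) (hp : Function.Periodic f (2 * π)) (a : ℝ) :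
    eLpNorm (fun t => f (t + a)) s (volume.restrict (Set.Ioc (-π) π)) =
      eLpNorm f s (volume.restrict (Set.Ioc (-π) π)) := by
  have : Fact (0 < 2 * π) := ⟨by positivity⟩
  have hmp := AddCircle.measurePreserving_mk (2 * π) (-π)
  rw [show -π + 2 * π = π by ring] at hmp
  have hl : Continuous hp.lift := by
    exact continuous_coinduced_dom.2 hf
  have h1 : f = hp.lift ∘ (fun x : ℝ => (x : AddCircle (2 * π))) := by
    ext x; simp
  have h2 : (fun t => f (t + a)) =
      (fun y => hp.lift (y + (a : AddCircle (2 * π)))) ∘ (fun x : ℝ => (x : AddCircle (2 * π))) := by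
    ext x
    simp [← AddCircle.coe_add, -QuotientAddGroup.mk_add]
  have hl2 : Continuous (fun y => hp.lift (y + (a : AddCircle (2 * π)))) := by fun_prop
  have e1 : eLpNorm f s (volume.restrict (Set.Ioc (-π) π)) = eLpNorm hp.lift s volume := by
    conv_lhs => rw [h1]
    exact eLpNorm_comp_measurePreserving hl.aestronglyMeasurable hmp
  have e2 : eLpNorm (fun t => f (t + a)) s (volume.restrict (Set.Ioc (-π) π)) =
      eLpNorm (fun y => hp.lift (y + (a : AddCircle (2 * π)))) s volume := by
    rw [h2]
    exact eLpNorm_comp_measurePreserving hl2.aestronglyMeasurable hmp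
  rw [e1, e2]
  exact eLpNorm_comp_measurePreserving hl.aestronglyMeasurable
    (measurePreserving_add_right volume (a : AddCircle (2 * π)))

lemma pn_shift (s : ℝ≥0∞) {f : ℝ → ℝ} (hf : Continuous f) (hp : Function.Periodic f (2 * π)) (a : ℝ) :
    periodNorm s (fun t => f (t + a)) = periodNorm s f := by
  unfold periodNorm
  rw [eLp_shift s hf hp a]

lemma re_mul_exp (w : ℂ) (v : ℝ) :
    (w * Complex.exp (v * Complex.I)).re = ‖w‖ * Real.cos (v + w.arg) := by
  conv_lhs => rw [← Complex.norm_mul_exp_arg_mul_I w]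
  rw [mul_assoc, ← Complex.exp_add, ← add_mul, ← Complex.ofReal_add, Complex.re_ofReal_mul,
    Complex.exp_ofReal_mul_I_re, add_comm]

lemma pn_top_le {f : ℝ → ℝ} {C : ℝ} (hC : 0 ≤ C) (h : ∀ t ∈ Set.Icc (-π) π, |f t| ≤ C) :
    periodNorm ∞ f ≤ C := by
  unfold periodNorm
  rw [eLpNorm_exponent_top]
  refine ENNReal.toReal_le_of_le_ofReal hC (eLpNormEssSup_le_of_ae_bound ?_)
  filter_upwards [ae_restrict_mem measurableSet_Ioc] with x hx
  exact h x (Set.Ioc_subset_Icc_self hx)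

lemma le_pn_top {f : ℝ → ℝ} (hf : Continuous f) {t : ℝ} (ht : t ∈ Set.Icc (-π) π) :
    |f t| ≤ periodNorm ∞ f := by
  have hae : ∀ᵐ x ∂(volume.restrict (Set.Ioc (-π) π)), |f x| ≤ periodNorm ∞ f := by
    filter_upwards [ae_le_eLpNormEssSup (f := f) (μ := volume.restrict (Set.Ioc (-π) π))] with x hx
    have := ENNReal.toReal_mono (by simpa using (pn_memLp ∞ hf).2.ne) hx
    simpa [periodNorm] using this
  have h2 : (fun x => max |f x| (periodNorm ∞ f)) =ᵐ[volume.restrict (Set.Icc (-π) π)]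
      (fun _ => periodNorm ∞ f) := by
    rw [← restrict_Ioc_eq_restrict_Icc]
    filter_upwards [hae] with x hx
    exact max_eq_right hx
  have h3 := Measure.eqOn_Icc_of_ae_eq volume (by linarith [pi_pos] : (-π : ℝ) ≠ π) h2
    (by fun_prop) (by fun_prop)
  exact max_eq_right_iff.1 (h3 ht)

lemma c_top : periodNorm ∞ Real.cos / (2 * π) ^ (1 / (∞ : ℝ≥0∞).toReal) = 1 := by
  have h1 : periodNorm ∞ Real.cos = 1 := by
    apply le_antisymm
    · exact pn_top_le zero_le_one fun t _ => Real.abs_cos_le_one t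
    · have := le_pn_top Real.continuous_cos (t := 0) ⟨by linarith [pi_pos], by linarith [pi_pos]⟩
      simpa using this
  simp [h1]

lemma avg (s : ℝ≥0∞) (hs : 1 ≤ s) (hs' : s ≠ ∞) {z : ℝ → ℂ} (hz : Continuous z) :
    ∫⁻ v in Set.Ioc (-π) π, (eLpNorm (fun t => (z t * Complex.exp (v * Complex.I)).re) s
      (volume.restrict (Set.Ioc (-π) π))) ^ s.toReal =
    (eLpNorm (fun t => ‖z t‖) s (volume.restrict (Set.Ioc (-π) π))) ^ s.toReal *
    (eLpNorm Real.cos s (volume.restrict (Set.Ioc (-π) π))) ^ s.toReal := by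
  have hs0 : s ≠ 0 := by rintro rfl; simp at hs
  have hp : s.toReal ≠ 0 := by simp [ENNReal.toReal_eq_zero_iff, hs0, hs']
  have key : ∀ f : ℝ → ℝ, (eLpNorm f s (volume.restrict (Set.Ioc (-π) π))) ^ s.toReal =
      ∫⁻ t in Set.Ioc (-π) π, ‖f t‖ₑ ^ s.toReal := by
    intro f
    rw [eLpNorm_eq_lintegral_rpow_enorm_toReal hs0 hs', ← ENNReal.rpow_mul]
    simp [hp]
  simp_rw [key]
  rw [lintegral_lintegral_swap]
  · have inner : ∀ t, ∫⁻ v in Set.Ioc (-π) π, ‖(z t * Complex.exp (v * Complex.I)).re‖ₑ ^ s.toReal =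
        ‖‖z t‖‖ₑ ^ s.toReal * ∫⁻ t in Set.Ioc (-π) π, ‖Real.cos t‖ₑ ^ s.toReal := by
      intro t
      simp_rw [re_mul_exp]
      rw [← key, ← key, ← eLp_shift s Real.continuous_cos Real.cos_periodic (z t).arg,
        ← ENNReal.mul_rpow_of_nonneg _ _ ENNReal.toReal_nonneg]
      congr 1
      exact eLpNorm_const_smul ‖z t‖ (fun v => Real.cos (v + (z t).arg)) s _
    simp_rw [inner]
    rw [lintegral_mul_const]
    have : Measurable z := hz.measurable
    fun_prop
  · refine Measurable.aemeasurable ?_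
    apply Measurable.pow_const
    apply Measurable.enorm
    apply Continuous.measurable
    fun_prop

lemma key_upper (s : ℝ≥0∞) (hs : 1 ≤ s) {z : ℝ → ℂ} (hz : Continuous z) {B : ℝ}
    (h : ∀ v : ℝ, |v| ≤ π → periodNorm s (fun t => (z t * Complex.exp (v * Complex.I)).re) ≤ B) :
    periodNorm s (fun t => ‖z t‖) * (periodNorm s Real.cos / (2 * π) ^ (1 / s.toReal)) ≤ B := by
  have hB : 0 ≤ B := (pn_nonneg _ _).trans (h 0 (by simpa using pi_pos.le))
  by_cases hs' : s = ∞
  · subst hs'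
    rw [c_top, mul_one]
    obtain ⟨t₀, ht₀, hmax⟩ := (isCompact_Icc (a := -π) (b := π)).exists_isMaxOn
      ⟨0, by linarith [pi_pos], by linarith [pi_pos]⟩ (f := fun t => ‖z t‖) hz.norm.continuousOn
    have h1 : periodNorm ∞ (fun t => ‖z t‖) ≤ ‖z t₀‖ :=
      pn_top_le (norm_nonneg _) fun t ht => by simpa using hmax ht
    have hv : |(-(z t₀).arg)| ≤ π := by rw [abs_neg]; exact Complex.abs_arg_le_pi _
    have h2 := le_pn_top (f := fun t => (z t * Complex.exp ((-(z t₀).arg : ℝ) * Complex.I)).re)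
      (by fun_prop) ht₀
    have h3 := h _ hv
    rw [re_mul_exp] at h2
    simp only [neg_add_cancel, Real.cos_zero, mul_one, abs_norm] at h2
    linarith
  · have hs0 : s ≠ 0 := by rintro rfl; simp at hs
    have hp : 0 < s.toReal := ENNReal.toReal_pos hs0 hs'
    have ha := avg s hs hs' hz
    have hle : (eLpNorm (fun t => ‖z t‖) s (volume.restrict (Set.Ioc (-π) π))) ^ s.toReal *
        (eLpNorm Real.cos s (volume.restrict (Set.Ioc (-π) π))) ^ s.toReal ≤
        (ENNReal.ofReal B) ^ s.toReal * ENNReal.ofReal (2 * π) := by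
      rw [← ha]
      calc _ ≤ ∫⁻ v in Set.Ioc (-π) π, (ENNReal.ofReal B) ^ s.toReal := by
            refine setLIntegral_mono measurable_const fun v hv => ?_
            refine ENNReal.rpow_le_rpow ?_ hp.le
            refine (ENNReal.le_ofReal_iff_toReal_le (pn_memLp s (by fun_prop)).2.ne hB).2 ?_
            exact h v (abs_le.2 ⟨hv.1.le, hv.2⟩)
        _ = _ := by rw [setLIntegral_const, Real.volume_Ioc]; ring_nf
    have h2 := ENNReal.toReal_mono (ENNReal.mul_ne_top
      (ENNReal.rpow_ne_top_of_nonneg hp.le ENNReal.ofReal_ne_top) ENNReal.ofReal_ne_top) hle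
    rw [ENNReal.toReal_mul, ENNReal.toReal_mul, ← ENNReal.toReal_rpow, ← ENNReal.toReal_rpow,
      ← ENNReal.toReal_rpow, ENNReal.toReal_ofReal hB, ENNReal.toReal_ofReal (by positivity)] at h2
    change periodNorm s (fun t => ‖z t‖) ^ s.toReal * periodNorm s Real.cos ^ s.toReal ≤ _ at h2
    have hR := pn_nonneg s (fun t => ‖z t‖)
    have hC := pn_nonneg s Real.cos
    have hT : 0 < (2 * π) ^ (1 / s.toReal) := by positivity
    rw [← mul_div_assoc, div_le_iff₀ hT]
    refine (Real.rpow_le_rpow_iff (by positivity) (by positivity) hp).1 ?_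
    rw [Real.mul_rpow hR hC, Real.mul_rpow hB hT.le, ← Real.rpow_mul (by positivity),
      one_div_mul_cancel hp.ne', Real.rpow_one]
    exact h2

lemma key_lower (s : ℝ≥0∞) (hs : 1 ≤ s) {z : ℝ → ℂ} (hz : Continuous z) {B : ℝ}
    (h : ∀ v : ℝ, |v| ≤ π → B ≤ periodNorm s (fun t => (z t * Complex.exp (v * Complex.I)).re)) :
    B ≤ periodNorm s (fun t => ‖z t‖) * (periodNorm s Real.cos / (2 * π) ^ (1 / s.toReal)) := by
  have hR := pn_nonneg s (fun t => ‖z t‖)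
  have hC := pn_nonneg s Real.cos
  have hT : 0 < (2 * π) ^ (1 / s.toReal) := by positivity
  rcases le_total B 0 with hB | hB
  · exact hB.trans (by positivity)
  by_cases hs' : s = ∞
  · subst hs'
    rw [c_top, mul_one]
    refine (h 0 (by simpa using pi_pos.le)).trans (pn_mono _ hz.norm fun t => ?_)
    simpa using Complex.abs_re_le_norm (z t)
  · have hs0 : s ≠ 0 := by rintro rfl; simp at hs
    have hp : 0 < s.toReal := ENNReal.toReal_pos hs0 hs'
    have ha := avg s hs hs' hz
    have hle : (ENNReal.ofReal B) ^ s.toReal * ENNReal.ofReal (2 * π) ≤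
        (eLpNorm (fun t => ‖z t‖) s (volume.restrict (Set.Ioc (-π) π))) ^ s.toReal *
        (eLpNorm Real.cos s (volume.restrict (Set.Ioc (-π) π))) ^ s.toReal := by
      rw [← ha]
      calc _ = ∫⁻ v in Set.Ioc (-π) π, (ENNReal.ofReal B) ^ s.toReal := by
            rw [setLIntegral_const, Real.volume_Ioc]; ring_nf
        _ ≤ _ := by
            refine setLIntegral_mono' measurableSet_Ioc fun v hv => ?_
            refine ENNReal.rpow_le_rpow ?_ hp.le
            exact ENNReal.ofReal_le_of_le_toReal (h v (abs_le.2 ⟨hv.1.le, hv.2⟩))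
    have h2 := ENNReal.toReal_mono (ENNReal.mul_ne_top
      (ENNReal.rpow_ne_top_of_nonneg hp.le (pn_memLp s hz.norm).2.ne)
      (ENNReal.rpow_ne_top_of_nonneg hp.le (pn_memLp s Real.continuous_cos).2.ne)) hle
    rw [ENNReal.toReal_mul, ENNReal.toReal_mul, ← ENNReal.toReal_rpow, ← ENNReal.toReal_rpow,
      ← ENNReal.toReal_rpow, ENNReal.toReal_ofReal hB, ENNReal.toReal_ofReal (by positivity)] at h2
    change _ ≤ periodNorm s (fun t => ‖z t‖) ^ s.toReal * periodNorm s Real.cos ^ s.toReal at h2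
    rw [← mul_div_assoc, le_div_iff₀ hT]
    refine (Real.rpow_le_rpow_iff (by positivity) (by positivity) hp).1 ?_
    rw [Real.mul_rpow hR hC, Real.mul_rpow hB hT.le, ← Real.rpow_mul (by positivity),
      one_div_mul_cancel hp.ne', Real.rpow_one]
    exact h2

/-- Local variation of the complex amplitude. -/
lemma F_var {F F' : ℝ → ℂ} (hF : ∀ t, HasDerivAt F (F' t) t) (h0 : ∀ t, F t ≠ 0) {M : ℝ}
    (hM : ∀ t, ‖F' t‖ ≤ M * ‖F t‖) {t u : ℝ} (hu : M * |u| ≤ 1 / 2) :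
    ‖F (t + u) - F t‖ ≤ 2 * M * |u| * ‖F t‖ := by
  have hM0 : 0 ≤ M := by
    have := (norm_nonneg _).trans (hM 0)
    exact nonneg_of_mul_nonneg_left this (norm_pos_iff.2 (h0 0))
  have hlog : ∀ x y, |Real.log (‖F y‖ ^ 2) - Real.log (‖F x‖ ^ 2)| ≤ 2 * M * |y - x| := by
    intro x y
    have hd : ∀ t ∈ (Set.univ : Set ℝ), HasDerivWithinAt (fun t => Real.log (‖F t‖ ^ 2))
        (2 * inner ℝ (F t) (F' t) / ‖F t‖ ^ 2) Set.univ t := by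
      intro t _
      exact ((hF t).norm_sq.log (by simpa using h0 t)).hasDerivWithinAt
    refine Convex.norm_image_sub_le_of_norm_hasDerivWithin_le hd ?_ convex_univ trivial trivial
    intro t _
    have hpos : 0 < ‖F t‖ := norm_pos_iff.2 (h0 t)
    rw [norm_div, norm_mul, norm_pow, norm_norm, div_le_iff₀ (by positivity)]
    have := norm_inner_le_norm (𝕜 := ℝ) (F t) (F' t)
    have h2 := hM t
    simp only [Real.norm_ofNat]
    nlinarith
  have hr : ∀ x ∈ Set.uIcc t (t + u), ‖F x‖ ≤ 2 * ‖F t‖ := by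
    intro x hx
    have hxt : |x - t| ≤ |u| := by
      have := Set.abs_sub_left_of_mem_uIcc hx
      simpa using this
    have h1 := (le_abs_self _).trans (hlog t x)
    rw [Real.log_pow, Real.log_pow] at h1
    have h2 : M * |x - t| ≤ M * |u| := by gcongr
    have hl2 := Real.log_two_gt_d9
    push_cast at h1
    have h3 : Real.log ‖F x‖ ≤ Real.log (2 * ‖F t‖) := by
      rw [Real.log_mul two_ne_zero (norm_ne_zero_iff.2 (h0 t))]
      linarith
    exact (Real.log_le_log_iff (norm_pos_iff.2 (h0 x))
      (mul_pos two_pos (norm_pos_iff.2 (h0 t)))).1 h3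
  have := Convex.norm_image_sub_le_of_norm_hasDerivWithin_le (C := 2 * M * ‖F t‖)
    (s := Set.uIcc t (t + u)) (fun x _ => (hF x).hasDerivWithinAt) (fun x hx => by
      have := hM x
      have := mul_le_mul_of_nonneg_left (hr x hx) hM0
      linarith) (convex_uIcc _ _) Set.left_mem_uIcc Set.right_mem_uIcc
  calc _ ≤ _ := this
    _ = _ := by simp; ring

lemma main_bound (s : ℝ≥0∞) (hs : 1 ≤ s) {F F' : ℝ → ℂ} (hF : ∀ t, HasDerivAt F (F' t) t)
    (h0 : ∀ t, F t ≠ 0) (hper : ∀ t, F (t + 2 * π) = F t) {M : ℝ} 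
    (hM : ∀ t, ‖F' t‖ ≤ M * ‖F t‖) (γ : ℝ) (n : ℕ) (hn1 : 1 ≤ n) (φ : ℝ → ℝ)
    (hφ : ∀ t, φ t = (F t * Complex.exp ((n * t + γ : ℝ) * Complex.I)).re) :
    (∀ a, (1 / 2) * periodNorm s (fun t => φ (t + a) - φ t) ≤ periodNorm s φ) ∧
    periodNorm s φ ≤ periodNorm s (fun t => ‖F t‖) ∧
    (4 * π * M ≤ n → 
      |periodNorm s φ - periodNorm s (fun t => ‖F t‖) *
        (periodNorm s Real.cos / (2 * π) ^ (1 / s.toReal))| ≤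
        2 * π * M / n * periodNorm s (fun t => ‖F t‖) ∧
      periodNorm s φ - π * M / n * periodNorm s (fun t => ‖F t‖) ≤
        (1 / 2) * periodNorm s (fun t => φ (t + π / n) - φ t)) := by
  have hFc : Continuous F := continuous_iff_continuousAt.2 fun t => (hF t).continuousAt
  have hM0 : 0 ≤ M := by
    have := (norm_nonneg _).trans (hM 0)
    exact nonneg_of_mul_nonneg_left this (norm_pos_iff.2 (h0 0))
  have hn : (0 : ℝ) < n := by exact_mod_cast hn1
  have hφc : Continuous φ := by
    rw [show φ = fun t => _ from funext hφ]; fun_prop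
  have hφp : Function.Periodic φ (2 * π) := by
    intro t
    rw [hφ, hφ, hper]
    congr 2
    rw [show ((n * (t + 2 * π) + γ : ℝ) : ℂ) * Complex.I =
      (n * t + γ : ℝ) * Complex.I + n * (2 * π * Complex.I) by push_cast; ring]
    rw [Complex.exp_add, Complex.exp_nat_mul_two_pi_mul_I, mul_one]
  set R := periodNorm s (fun t => ‖F t‖) with hR
  have hR0 : 0 ≤ R := pn_nonneg _ _
  refine ⟨fun a => ?_, ?_, fun hsm => ?_⟩
  · have h1 := pn_add_le s hs (f := fun t => φ (t + a)) (g := fun t => (-1) * φ t) (by fun_prop)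
      (by fun_prop)
    rw [pn_shift s hφc hφp, pn_const_mul] at h1
    simp only [neg_mul, one_mul, abs_neg, abs_one, ← sub_eq_add_neg] at h1
    linarith
  · refine pn_mono s hFc.norm fun t => ?_
    rw [hφ]
    refine (Complex.abs_re_le_norm _).trans ?_
    rw [norm_mul, Complex.norm_exp_ofReal_mul_I, mul_one]
  · -- shift estimate
    have hMn : ∀ v : ℝ, |v| ≤ π → M * |v / n| ≤ M * (π / n) := by
      intro v hv
      rw [abs_div, abs_of_pos hn]
      gcongr
    have hMs : M * (π / n) ≤ 1 / 4 := by
      rw [← mul_div_assoc, div_le_iff₀ hn]; linarith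
    have hvar : ∀ v : ℝ, |v| ≤ π → ∀ t, ‖F (t + v / n) - F t‖ ≤ 2 * π * M / n * ‖F t‖ := by
      intro v hv t
      have h1 := hMn v hv
      refine (F_var hF h0 hM (by linarith)).trans ?_
      refine mul_le_mul_of_nonneg_right ?_ (norm_nonneg _)
      calc 2 * M * |v / n| = 2 * (M * |v / n|) := by ring
        _ ≤ 2 * (M * (π / n)) := by linarith
        _ = _ := by ring
    have hε : 0 ≤ 2 * π * M / n := by positivity
    have hexp : ∀ v t : ℝ, Complex.exp ((n * (t + v / n) + γ : ℝ) * Complex.I) =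
        Complex.exp ((n * t + γ : ℝ) * Complex.I) * Complex.exp (v * Complex.I) := by
      intro v t
      rw [← Complex.exp_add]
      congr 1
      have : (n * (t + v / n) + γ : ℝ) = n * t + γ + v := by field_simp; ring
      rw [this]; push_cast; ring
    set z : ℝ → ℂ := fun t => F t * Complex.exp ((n * t + γ : ℝ) * Complex.I) with hz
    have hzc : Continuous z := by fun_prop
    have hzn : (fun t => ‖z t‖) = fun t => ‖F t‖ := by
      ext t; simp only [hz]
      rw [norm_mul, Complex.norm_exp_ofReal_mul_I, mul_one]
    have hdiff : ∀ v : ℝ, |v| ≤ π → ∀ t,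
        |φ (t + v / n) - (z t * Complex.exp (v * Complex.I)).re| ≤ 2 * π * M / n * ‖F t‖ := by
      intro v hv t
      rw [hφ, hexp, ← Complex.sub_re]
      refine (Complex.abs_re_le_norm _).trans ?_
      rw [show F (t + v / n) * (Complex.exp ((n * t + γ : ℝ) * Complex.I) *
          Complex.exp (v * Complex.I)) - z t * Complex.exp (v * Complex.I) =
          (F (t + v / n) - F t) * Complex.exp ((n * t + γ : ℝ) * Complex.I) *
          Complex.exp (v * Complex.I) by simp only [hz]; ring]
      rw [norm_mul, norm_mul, Complex.norm_exp_ofReal_mul_I, Complex.norm_exp_ofReal_mul_I,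
        mul_one, mul_one]
      exact hvar v hv t
    have hdn : ∀ v : ℝ, |v| ≤ π → ∀ c : ℝ, |c| = 1 →
        periodNorm s (fun t => c * (φ (t + v / n) - (z t * Complex.exp (v * Complex.I)).re)) ≤
        2 * π * M / n * R := by
      intro v hv c hc
      have : 2 * π * M / n * R = periodNorm s (fun t => 2 * π * M / n * ‖F t‖) := by
        rw [pn_const_mul, abs_of_nonneg hε]
      rw [this]
      refine pn_mono s (by fun_prop) fun t => ?_
      rw [abs_mul, hc, one_mul]
      exact hdiff v hv t
    have hA : ∀ v : ℝ, |v| ≤ π → periodNorm s φ ≤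
        periodNorm s (fun t => (z t * Complex.exp (v * Complex.I)).re) + 2 * π * M / n * R := by
      intro v hv
      have h1 := pn_add_le s hs (f := fun t => (z t * Complex.exp (v * Complex.I)).re)
        (g := fun t => 1 * (φ (t + v / n) - (z t * Complex.exp (v * Complex.I)).re))
        (by fun_prop) (by fun_prop)
      have h2 := hdn v hv 1 (by simp)
      have h3 : (fun t => (z t * Complex.exp (v * Complex.I)).re +
        1 * (φ (t + v / n) - (z t * Complex.exp (v * Complex.I)).re)) = fun t => φ (t + v / n) := by
        ext t; ring
      rw [h3, pn_shift s hφc hφp] at h1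
      linarith
    have hB : ∀ v : ℝ, |v| ≤ π → 
        periodNorm s (fun t => (z t * Complex.exp (v * Complex.I)).re) ≤ 
          periodNorm s φ + 2 * π * M / n * R := by
      intro v hv
      have h1 := pn_add_le s hs (f := fun t => φ (t + v / n))
        (g := fun t => (-1) * (φ (t + v / n) - (z t * Complex.exp (v * Complex.I)).re))
        (by fun_prop) (by fun_prop)
      have h2 := hdn v hv (-1) (by simp)
      have h3 : (fun t => φ (t + v / n) + 
        (-1) * (φ (t + v / n) - (z t * Complex.exp (v * Complex.I)).re)) =
          fun t => (z t * Complex.exp (v * Complex.I)).re := by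
        ext t; ring
      rw [h3, pn_shift s hφc hφp] at h1
      linarith
    refine ⟨?_, ?_⟩
    · have h1 := key_upper s hs hzc hB
      have h2 := key_lower s hs hzc (B := periodNorm s φ - 2 * π * M / n * R)
        fun v hv => by linarith [hA v hv]
      rw [hzn] at h1 h2
      rw [abs_le]
      constructor <;> linarith
    · have hzπ : ∀ t, (z t * Complex.exp ((π : ℝ) * Complex.I)).re = - φ t := by
        intro t
        rw [Complex.exp_pi_mul_I, hφ]; simp [hz]
      have h2 := hdn π (abs_of_pos pi_pos).le 1 (by simp)
      simp_rw [hzπ] at h2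
      have h1 := pn_add_le s hs (f := fun t => (-1) * (φ (t + π / n) - φ t))
        (g := fun t => 1 * (φ (t + π / n) - - φ t)) (by fun_prop) (by fun_prop)
      have h3 : (fun t => (-1) * (φ (t + π / n) - φ t) + 1 * (φ (t + π / n) - - φ t)) =
          fun t => 2 * φ t := by ext t; ring
      rw [h3, pn_const_mul, pn_const_mul] at h1
      simp only [abs_neg, abs_one, one_mul, abs_two] at h1 h2
      have : π * M / n * R = (2 * π * M / n * R) / 2 := by ring
      linarith

theorem statement8 (s : ℝ≥0∞) (hs : 1 ≤ s) (g h : ℝ → ℝ)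
    (hgper : ∀ t, g (t + 2 * π) = g t) (hhper : ∀ t, h (t + 2 * π) = h t)
    (hg : Differentiable ℝ g) (hh : Differentiable ℝ h)
    (hr : ∀ t, Real.sqrt (g t ^ 2 + h t ^ 2) ≠ 0)
    (hMb : BddAbove (Set.range fun t =>
      Real.sqrt (deriv g t ^ 2 + deriv h t ^ 2) / Real.sqrt (g t ^ 2 + h t ^ 2)))
    (M : ℝ)
    (hM : M = ⨆ t : ℝ, Real.sqrt (deriv g t ^ 2 + deriv h t ^ 2) / Real.sqrt (g t ^ 2 + h t ^ 2))
    (γ : ℝ) (n : ℕ) (hn1 : 1 ≤ n)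
    (hn : s ≠ ∞ → 4 * π * s.toReal * M ≤ (n : ℝ)) :
    ∃ δ : ℝ, |δ| < 14 * π ∧
      (⨆ a : ℝ, (1 / 2) * periodNorm s
          (fun t => (g (t + a) * Real.cos (n * (t + a) + γ) + h (t + a) * Real.sin (n * (t + a) + γ)) -
            (g t * Real.cos (n * t + γ) + h t * Real.sin (n * t + γ)))) =
        periodNorm s (fun t => Real.sqrt (g t ^ 2 + h t ^ 2)) *
          (periodNorm s Real.cos / (2 * π) ^ (1 / s.toReal) + δ * M / n) := by
  have hnpos : (0 : ℝ) < n := by exact_mod_cast hn1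
  set F : ℝ → ℂ := fun t => (g t : ℂ) - h t * Complex.I with hFdef
  set F' : ℝ → ℂ := fun t => ((deriv g t : ℝ) : ℂ) - ((deriv h t : ℝ) : ℂ) * Complex.I with hF'def
  have hnorm : ∀ x y : ℝ, ‖(x : ℂ) - y * Complex.I‖ = Real.sqrt (x ^ 2 + y ^ 2) := by
    intro x y
    rw [Complex.norm_def, Complex.normSq_apply]
    congr 1
    simp; ring
  have hFn : ∀ t, ‖F t‖ = Real.sqrt (g t ^ 2 + h t ^ 2) := fun t => hnorm _ _
  have hF'n : ∀ t, ‖F' t‖ = Real.sqrt (deriv g t ^ 2 + deriv h t ^ 2) := fun t => hnorm _ _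
  have h0 : ∀ t, F t ≠ 0 := fun t => norm_ne_zero_iff.1 (by rw [hFn]; exact hr t)
  have hF : ∀ t, HasDerivAt F (F' t) t := fun t =>
    ((hg t).hasDerivAt.ofReal_comp).sub (((hh t).hasDerivAt.ofReal_comp).mul_const _)
  have hper : ∀ t, F (t + 2 * π) = F t := fun t => by simp only [hFdef, hgper, hhper]
  have hMF : ∀ t, ‖F' t‖ ≤ M * ‖F t‖ := by
    intro t
    rw [← div_le_iff₀ (norm_pos_iff.2 (h0 t)), hFn, hF'n, hM]
    exact le_ciSup hMb t
  have hM0 : 0 ≤ M := by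
    have := (norm_nonneg _).trans (hMF 0)
    exact nonneg_of_mul_nonneg_left this (norm_pos_iff.2 (h0 0))
  set φ : ℝ → ℝ := fun t => g t * Real.cos (n * t + γ) + h t * Real.sin (n * t + γ) with hφdef
  have hφ : ∀ t, φ t = (F t * Complex.exp ((n * t + γ : ℝ) * Complex.I)).re := by
    intro t
    rw [Complex.mul_re, Complex.exp_ofReal_mul_I_re, Complex.exp_ofReal_mul_I_im]
    simp [hFdef, hφdef]
  obtain ⟨hup, hφR, hlow⟩ := main_bound s hs hF h0 hper hMF γ n hn1 φ hφ
  have hbdd : BddAbove (Set.range fun a => (1 / 2) * periodNorm s (fun t => φ (t + a) - φ t)) :=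
    ⟨_, by rintro _ ⟨a, rfl⟩; exact hup a⟩
  change ∃ δ : ℝ, |δ| < 14 * π ∧
      (⨆ a : ℝ, (1 / 2) * periodNorm s (fun t => φ (t + a) - φ t)) = _
  simp_rw [← hFn]
  set S := ⨆ a : ℝ, (1 / 2) * periodNorm s (fun t => φ (t + a) - φ t) with hS
  have hFc : Continuous F := continuous_iff_continuousAt.2 fun t => (hF t).continuousAt
  set R := periodNorm s (fun t => ‖F t‖) with hR
  set c := periodNorm s Real.cos / (2 * π) ^ (1 / s.toReal) with hc
  have hSle : S ≤ periodNorm s φ := ciSup_le hup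
  have hS0 : 0 ≤ S := le_ciSup_of_le hbdd 0 (mul_nonneg (by norm_num) (pn_nonneg _ _))
  have hs0 : s ≠ 0 := by rintro rfl; simp at hs
  have hRpos : 0 < R := by
    refine ENNReal.toReal_pos ?_ (pn_memLp s hFc.norm).2.ne
    intro hz
    rw [eLpNorm_eq_zero_iff hFc.norm.aestronglyMeasurable hs0] at hz
    have h1 : (volume.restrict (Set.Ioc (-π) π)) Set.univ = 0 := by
      refine measure_mono_null (t := {x | ¬ (‖F x‖ = 0)}) (fun x _ => ?_) hz
      exact norm_ne_zero_iff.2 (h0 x)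
    rw [Measure.restrict_apply_univ, Real.volume_Ioc, ENNReal.ofReal_eq_zero] at h1
    linarith [pi_pos]
  have hfin : |S - R * c| ≤ 13 * π * (M / n) * R := by
    have hMn : 0 ≤ M / n := by positivity
    by_cases hsm : 4 * π * M ≤ n
    · obtain ⟨h1, h2⟩ := hlow hsm
      have h3 : (1 / 2) * periodNorm s (fun t => φ (t + π / n) - φ t) ≤ S :=
        le_ciSup hbdd (π / n)
      have e1 : 2 * π * M / n * R = 2 * (π * (M / n) * R) := by ring
      have e2 : π * M / n * R = π * (M / n) * R := by ring
      have e3 : 13 * π * (M / n) * R = 13 * (π * (M / n) * R) := by ring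
      have e4 : 0 ≤ π * (M / n) * R := by positivity
      rw [e1] at h1
      rw [e2] at h2
      rw [e3]
      rw [abs_le] at h1 ⊢
      constructor <;> linarith
    · have hst : s = ∞ := by
        by_contra hne
        apply hsm
        refine le_trans ?_ (hn hne)
        have : 1 ≤ s.toReal := by
          have := ENNReal.toReal_mono hne hs
          simpa using this
        have h4 : 0 ≤ 4 * π * M := by positivity
        nlinarith
      have hc1 : c = 1 := by rw [hc, hst]; exact c_top
      have h5 : 1 ≤ 4 * π * (M / n) := by
        rw [← mul_div_assoc, le_div_iff₀ hnpos]; linarith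
      rw [hc1, abs_le]
      have : R ≤ 4 * π * (M / n) * R := by nlinarith
      have e3 : 13 * π * (M / n) * R = 4 * π * (M / n) * R + 9 * (π * (M / n) * R) := by ring
      have e4 : 0 ≤ π * (M / n) * R := by positivity
      constructor <;> linarith
  rcases hM0.eq_or_lt with hMz | hMp
  · refine ⟨0, by simpa using pi_pos, ?_⟩
    rw [← hMz] at hfin
    simp only [zero_div, mul_zero, zero_mul] at hfin
    have := abs_nonpos_iff.1 hfin
    simp only [zero_mul, zero_div, add_zero]
    linarith
  · refine ⟨(S - R * c) / (R * (M / n)), ?_, ?_⟩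
    · have hp : 0 < R * (M / n) := by positivity
      rw [abs_div, abs_of_pos hp, div_lt_iff₀ hp]
      have : 0 < π * (R * (M / n)) := by positivity
      linarith
    · field_simp
      ring
end
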